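/- Let ψ be a regular N-function satisfying the Δ₂-condition, and for a ≥ 0 set ψ'_a(t) := ψ'(a+t)·t/(a+t). Then there exists a constant c > 0, depending only on Δ₂(ψ), such that for every d, n ≥ 1, every P, Q ∈ ℝ^{d×n} and every t ≥ 0: ψ'_{|P|}(t) ≤ c·ψ'_{|Q|}(t) + c·ψ'_{|P|}(|P−Q|), where |·| denotes the Frobenius norm on ℝ^{d×n}. -/

import Mathlib

open Real Filter Set Topology

noncomputable section

/-- An N-function: convex on `[0,∞)`, vanishing at `0`, positive on `(0,∞)`,
with `ψ t / t → 0` as `t → 0⁺` and `ψ t / t → ∞` as `t → ∞`. -/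
def IsNFunction (ψ : ℝ → ℝ) : Prop :=
  ConvexOn ℝ (Set.Ici 0) ψ ∧ ψ 0 = 0 ∧ (∀ t > 0, 0 < ψ t) ∧
    Filter.Tendsto (fun t => ψ t / t) (nhdsWithin 0 (Set.Ioi 0)) (nhds 0) ∧
    Filter.Tendsto (fun t => ψ t / t) Filter.atTop Filter.atTop

/-- A regular N-function: an N-function which is `C¹` on `[0,∞)`, `C²` on `(0,∞)`,
with `ψ'' t > 0` for all `t > 0`. -/
def IsRegularNFunction (ψ : ℝ → ℝ) : Prop :=
  IsNFunction ψ ∧ ContDiffOn ℝ 1 ψ (Set.Ici 0) ∧ ContDiffOn ℝ 2 ψ (Set.Ioi 0) ∧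
    ∀ t > 0, 0 < deriv (deriv ψ) t

/-- A balanced N-function with characteristics `(γ₁, γ₂)`. -/
def IsBalancedNFunction (ψ : ℝ → ℝ) (γ₁ γ₂ : ℝ) : Prop :=
  IsRegularNFunction ψ ∧ 0 < γ₁ ∧ γ₁ ≤ 1 ∧ 1 ≤ γ₂ ∧
    ∀ t > 0, γ₁ * deriv ψ t ≤ t * deriv (deriv ψ) t ∧
      t * deriv (deriv ψ) t ≤ γ₂ * deriv ψ t

/-- The conjugate N-function `ψ*(t) = sup_{s ≥ 0} (s·t − ψ(s))`. -/
def conjNF (ψ : ℝ → ℝ) (t : ℝ) : ℝ :=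
  ⨆ s : Set.Ici (0:ℝ), ((s : ℝ) * t - ψ s)

/-- `ψ` satisfies the Δ₂-condition with constant `K`. -/
def SatisfiesDelta2 (ψ : ℝ → ℝ) (K : ℝ) : Prop :=
  2 < K ∧ ∀ t ≥ (0:ℝ), ψ (2 * t) ≤ K * ψ t

/-- The derivative `ψ'_a(t) = ψ'(a+t)·t/(a+t)` of the shifted N-function. -/
def shiftDF (ψ : ℝ → ℝ) (a t : ℝ) : ℝ := deriv ψ (a + t) * t / (a + t)

/-- The shifted N-function `ψ_a(t) = ∫₀ᵗ ψ'(a+s)·s/(a+s) ds`. -/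
def shiftNF (ψ : ℝ → ℝ) (a t : ℝ) : ℝ := ∫ s in (0:ℝ)..t, shiftDF ψ a s

/-- Frobenius norm of a `d×n` real matrix. -/
def frobNorm {d n : ℕ} (P : Fin d → Fin n → ℝ) : ℝ :=
  Real.sqrt (∑ i : Fin d, ∑ j : Fin n, (P i j) ^ 2)

/-- Frobenius inner product `P : Q` of two `d×n` real matrices. -/
def frobInner {d n : ℕ} (P Q : Fin d → Fin n → ℝ) : ℝ :=
  ∑ i : Fin d, ∑ j : Fin n, P i j * Q i j

/-- `F(P) = √(φ'(|P|)/|P|)·P` (equal to `0` at `P = 0`). -/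
def FmapNF (φ : ℝ → ℝ) {d n : ℕ} (P : Fin d → Fin n → ℝ) : Fin d → Fin n → ℝ :=
  Real.sqrt (deriv φ (frobNorm P) / frobNorm P) • P

/-- `F*(P) = √((φ*)'(|P|)/|P|)·P` (equal to `0` at `P = 0`). -/
def FstarNF (φ : ℝ → ℝ) {d n : ℕ} (P : Fin d → Fin n → ℝ) : Fin d → Fin n → ℝ :=
  Real.sqrt (deriv (conjNF φ) (frobNorm P) / frobNorm P) • P

/-- The standard basis matrix with a `1` in entry `(k,l)`. -/
def basisMat {d n : ℕ} (k : Fin d) (l : Fin n) : Fin d → Fin n → ℝ :=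
  fun i j => if i = k ∧ j = l then 1 else 0

/-- `𝒜` has `φ`-structure with constants `(γ₃, γ₄)`. -/
def HasPhiStructure {d n : ℕ} (A : (Fin d → Fin n → ℝ) → (Fin d → Fin n → ℝ))
    (φ : ℝ → ℝ) (γ₃ γ₄ : ℝ) : Prop :=
  0 < γ₃ ∧ γ₃ ≤ 1 ∧ 1 < γ₄ ∧ Continuous A ∧
    ContDiffOn ℝ 1 A {P | P ≠ 0} ∧ A 0 = 0 ∧
    (∀ P : Fin d → Fin n → ℝ, P ≠ 0 → ∀ Q : Fin d → Fin n → ℝ,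
      γ₃ * (deriv φ (frobNorm P) / frobNorm P) * (frobNorm Q) ^ 2 ≤
        ∑ i : Fin d, ∑ j : Fin n, ∑ k : Fin d, ∑ l : Fin n,
          fderiv ℝ A P (basisMat k l) i j * Q i j * Q k l) ∧
    (∀ P : Fin d → Fin n → ℝ, P ≠ 0 → ∀ (i k : Fin d) (j l : Fin n),
      |fderiv ℝ A P (basisMat k l) i j| ≤ γ₄ * (deriv φ (frobNorm P) / frobNorm P))

/-! Convexity and Δ₂ make `t ψ'(t)` comparable to `ψ t`, so `ψ'` is doubling with constant `K² / 2`.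
If `|P - Q| ≤ t`, then `|P| + t` and `|Q| + t` agree up to a factor `2`, and doubling bounds
`ψ'_{|P|}(t)` by `K² ψ'_{|Q|}(t)`. If `t ≤ |P - Q|`, monotonicity of `ψ'_{|P|}` gives the other
term. -/

section Derivative

variable {ψ : ℝ → ℝ} {K t : ℝ}

lemma monotoneOn_deriv_Ioi_of_convexOn (hconv : ConvexOn ℝ (Ici 0) ψ)
    (hdiff : DifferentiableOn ℝ ψ (Ioi 0)) : MonotoneOn (deriv ψ) (Ioi 0) :=
  (hconv.subset Ioi_subset_Ici_self (convex_Ioi 0)).monotoneOn_deriv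
    fun _ ht ↦ hdiff.differentiableAt (Ioi_mem_nhds ht)

lemma le_mul_deriv_of_convexOn (hconv : ConvexOn ℝ (Ici 0) ψ) (h₀ : ψ 0 = 0) (ht : 0 < t)
    (hdiff : DifferentiableAt ℝ ψ t) : ψ t ≤ t * deriv ψ t := by
  have hslope := hconv.slope_le_deriv self_mem_Ici (mem_Ici.2 ht.le) ht hdiff
  rwa [slope_def_field, h₀, sub_zero, sub_zero, div_le_iff₀' ht] at hslope

lemma mul_deriv_le_sub_of_convexOn (hconv : ConvexOn ℝ (Ici 0) ψ) (ht : 0 < t)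
    (hdiff : DifferentiableAt ℝ ψ t) : t * deriv ψ t ≤ ψ (2 * t) - ψ t := by
  have hlt : t < 2 * t := by linarith
  have hslope := hconv.deriv_le_slope (mem_Ici.2 ht.le) (mem_Ici.2 (ht.trans hlt).le) hlt hdiff
  have hlen : 2 * t - t = t := by ring
  rwa [slope_def_field, hlen, le_div_iff₀' ht] at hslope

namespace SatisfiesDelta2

lemma nonneg (hΔ : SatisfiesDelta2 ψ K) (hconv : ConvexOn ℝ (Ici 0) ψ) (h₀ : ψ 0 = 0)
    (ht : 0 ≤ t) : 0 ≤ ψ t := by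
  obtain ⟨hK, hdouble⟩ := hΔ
  have hmid : ψ t ≤ ψ (2 * t) / 2 := by
    have hcomb := hconv.2 self_mem_Ici (mem_Ici.2 (by positivity : 0 ≤ 2 * t))
      (by norm_num : (0 : ℝ) ≤ 1 / 2) (by norm_num : (0 : ℝ) ≤ 1 / 2) (by norm_num)
    have harg : (1 / 2 : ℝ) * 0 + 1 / 2 * (2 * t) = t := by ring
    simp only [smul_eq_mul, harg, h₀] at hcomb
    linarith
  have hprod : 0 ≤ (K - 2) * ψ t := by linarith [hdouble t ht]
  exact nonneg_of_mul_nonneg_right hprod (sub_pos.2 hK)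

lemma mul_deriv_le (hΔ : SatisfiesDelta2 ψ K) (hconv : ConvexOn ℝ (Ici 0) ψ) (h₀ : ψ 0 = 0)
    (ht : 0 < t) (hdiff : DifferentiableAt ℝ ψ t) : t * deriv ψ t ≤ K * ψ t := by
  linarith [mul_deriv_le_sub_of_convexOn hconv ht hdiff, hΔ.2 t ht.le, hΔ.nonneg hconv h₀ ht.le]

lemma deriv_nonneg (hΔ : SatisfiesDelta2 ψ K) (hconv : ConvexOn ℝ (Ici 0) ψ) (h₀ : ψ 0 = 0)
    (hdiff : DifferentiableOn ℝ ψ (Ioi 0)) (ht : 0 < t) : 0 ≤ deriv ψ t :=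
  nonneg_of_mul_nonneg_right ((hΔ.nonneg hconv h₀ ht.le).trans <|
    le_mul_deriv_of_convexOn hconv h₀ ht (hdiff.differentiableAt (Ioi_mem_nhds ht))) ht

lemma deriv_two_mul_le (hΔ : SatisfiesDelta2 ψ K) (hconv : ConvexOn ℝ (Ici 0) ψ) (h₀ : ψ 0 = 0)
    (hdiff : DifferentiableOn ℝ ψ (Ioi 0)) (ht : 0 < t) :
    deriv ψ (2 * t) ≤ K ^ 2 / 2 * deriv ψ t := by
  have hK : 0 ≤ K := by linarith [hΔ.1]
  have h2t : 0 < 2 * t := by positivity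
  have hchain : 2 * t * deriv ψ (2 * t) ≤ 2 * t * (K ^ 2 / 2 * deriv ψ t) :=
    calc 2 * t * deriv ψ (2 * t)
        ≤ K * ψ (2 * t) := hΔ.mul_deriv_le hconv h₀ h2t (hdiff.differentiableAt (Ioi_mem_nhds h2t))
      _ ≤ K * (K * ψ t) := by gcongr; exact hΔ.2 t ht.le
      _ ≤ K * (K * (t * deriv ψ t)) := by
        gcongr
        exact le_mul_deriv_of_convexOn hconv h₀ ht (hdiff.differentiableAt (Ioi_mem_nhds ht))
      _ = 2 * t * (K ^ 2 / 2 * deriv ψ t) := by ring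
  exact le_of_mul_le_mul_left hchain h2t

end SatisfiesDelta2

end Derivative

section Shift

variable {ψ : ℝ → ℝ} {a b t C : ℝ}

lemma shiftDF_nonneg (hpos : ∀ u > 0, 0 ≤ deriv ψ u) (ha : 0 ≤ a) (ht : 0 ≤ t) :
    0 ≤ shiftDF ψ a t := by
  rcases ht.eq_or_lt with rfl | ht
  · simp [shiftDF]
  · have := hpos (a + t) (by positivity)
    unfold shiftDF
    positivity

lemma monotoneOn_shiftDF (hpos : ∀ u > 0, 0 ≤ deriv ψ u) (hmono : MonotoneOn (deriv ψ) (Ioi 0))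
    (ha : 0 ≤ a) : MonotoneOn (shiftDF ψ a) (Ici 0) := by
  intro s hs t ht hst
  rw [mem_Ici] at hs ht
  rcases hs.eq_or_lt with rfl | hs
  · simpa [shiftDF] using shiftDF_nonneg hpos ha ht
  have has : 0 < a + s := by positivity
  have hat : 0 < a + t := by linarith
  have hderiv : deriv ψ (a + s) ≤ deriv ψ (a + t) := hmono has hat (by linarith)
  have hfrac : s / (a + s) ≤ t / (a + t) := by
    rw [div_le_div_iff₀ has hat]
    linarith [mul_le_mul_of_nonneg_left hst ha]
  simp only [shiftDF, mul_div_assoc]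
  exact mul_le_mul hderiv hfrac (by positivity) (hpos _ hat)

lemma shiftDF_le_mul_shiftDF (hpos : ∀ u > 0, 0 ≤ deriv ψ u)
    (hmono : MonotoneOn (deriv ψ) (Ioi 0)) (hdouble : ∀ u > 0, deriv ψ (2 * u) ≤ C * deriv ψ u)
    (ha : 0 ≤ a) (hb : 0 ≤ b) (hab : |a - b| ≤ t) :
    shiftDF ψ a t ≤ 2 * C * shiftDF ψ b t := by
  obtain ⟨hba, hab⟩ := abs_le.1 hab
  rcases (show 0 ≤ t by linarith).eq_or_lt with rfl | ht
  · simp [shiftDF]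
  have hat : 0 < a + t := by positivity
  have hbt : 0 < b + t := by positivity
  have hderiv : deriv ψ (a + t) ≤ C * deriv ψ (b + t) :=
    (hmono hat (mem_Ioi.2 (by positivity)) (by linarith)).trans (hdouble (b + t) hbt)
  have hfrac : t / (a + t) ≤ 2 * (t / (b + t)) := by
    rw [← mul_div_assoc, div_le_div_iff₀ hat hbt, mul_comm 2 t, mul_assoc]
    exact mul_le_mul_of_nonneg_left (by linarith) ht.le
  calc shiftDF ψ a t
      = deriv ψ (a + t) * (t / (a + t)) := mul_div_assoc ..
    _ ≤ C * deriv ψ (b + t) * (2 * (t / (b + t))) :=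
      mul_le_mul hderiv hfrac (by positivity) ((hpos _ hat).trans hderiv)
    _ = 2 * C * shiftDF ψ b t := by unfold shiftDF; ring

end Shift

theorem shift_deriv_change_general {E : Type*} [SeminormedAddCommGroup E] {ψ : ℝ → ℝ} {K c t : ℝ}
    (hconv : ConvexOn ℝ (Ici 0) ψ) (hdiff : DifferentiableOn ℝ ψ (Ioi 0)) (h₀ : ψ 0 = 0)
    (hΔ : SatisfiesDelta2 ψ K) (hc : K ^ 2 ≤ c) (x y : E) (ht : 0 ≤ t) :
    shiftDF ψ ‖x‖ t ≤ c * shiftDF ψ ‖y‖ t + c * shiftDF ψ ‖x‖ ‖x - y‖ := by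
  have hpos : ∀ u > 0, 0 ≤ deriv ψ u := fun _ ↦ hΔ.deriv_nonneg hconv h₀ hdiff
  have hmono := monotoneOn_deriv_Ioi_of_convexOn hconv hdiff
  have hc₁ : 1 ≤ c := by nlinarith [hΔ.1]
  have hy : 0 ≤ shiftDF ψ ‖y‖ t := shiftDF_nonneg hpos (norm_nonneg y) ht
  have hx : 0 ≤ shiftDF ψ ‖x‖ ‖x - y‖ := shiftDF_nonneg hpos (norm_nonneg x) (norm_nonneg _)
  rcases le_total ‖x - y‖ t with hxy | hxy
  · have hdouble : ∀ u > 0, deriv ψ (2 * u) ≤ K ^ 2 / 2 * deriv ψ u :=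
      fun _ ↦ hΔ.deriv_two_mul_le hconv h₀ hdiff
    calc shiftDF ψ ‖x‖ t
        ≤ 2 * (K ^ 2 / 2) * shiftDF ψ ‖y‖ t :=
          shiftDF_le_mul_shiftDF hpos hmono hdouble (norm_nonneg x) (norm_nonneg y)
            ((abs_norm_sub_norm_le x y).trans hxy)
      _ ≤ c * shiftDF ψ ‖y‖ t := by gcongr; linarith
      _ ≤ c * shiftDF ψ ‖y‖ t + c * shiftDF ψ ‖x‖ ‖x - y‖ :=
          le_add_of_nonneg_right (by positivity)
  · calc shiftDF ψ ‖x‖ t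
        ≤ shiftDF ψ ‖x‖ ‖x - y‖ :=
          monotoneOn_shiftDF hpos hmono (norm_nonneg x) ht (norm_nonneg _) hxy
      _ ≤ c * shiftDF ψ ‖x‖ ‖x - y‖ := le_mul_of_one_le_left hx hc₁
      _ ≤ c * shiftDF ψ ‖y‖ t + c * shiftDF ψ ‖x‖ ‖x - y‖ :=
          le_add_of_nonneg_left (by positivity)

open scoped Matrix.Norms.Frobenius

lemma frobNorm_eq_norm_of {d n : ℕ} (P : Fin d → Fin n → ℝ) : frobNorm P = ‖Matrix.of P‖ := by
  simp [frobNorm, Matrix.frobenius_norm_def, Real.sqrt_eq_rpow]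

/-- `ψ'_{|P|}(t) ≤ c·ψ'_{|Q|}(t) + c·ψ'_{|P|}(|P−Q|)` with `c`
depending only on the Δ₂-constant of `ψ`. -/
theorem shift_deriv_change (K₁ : ℝ) :
    ∃ c > (0:ℝ), ∀ ψ : ℝ → ℝ, IsRegularNFunction ψ → SatisfiesDelta2 ψ K₁ →
      ∀ d n : ℕ, 1 ≤ d → 1 ≤ n → ∀ P Q : Fin d → Fin n → ℝ, ∀ t ≥ (0:ℝ),
        shiftDF ψ (frobNorm P) t ≤
          c * shiftDF ψ (frobNorm Q) t + c * shiftDF ψ (frobNorm P) (frobNorm (P - Q)) := by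
  refine ⟨K₁ ^ 2 + 1, by positivity, ?_⟩
  rintro ψ ⟨⟨hconv, h₀, -⟩, -, hC2, -⟩ hΔ d n - - P Q t ht
  simpa only [frobNorm_eq_norm_of, ← Matrix.of_sub_of] using shift_deriv_change_general hconv
    (hC2.differentiableOn two_ne_zero) h₀ hΔ (lt_add_one _).le (Matrix.of P) (Matrix.of Q) ht

end
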